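/- arXiv:1904.08096 — 12 statements merged into one kernel-verified Lean document; each statement's English description precedes it below -/
import Mathlib

section
/- For all n ∈ ℕ and all a, b, b' ∈ Finset Pk: Σ_{a' ∈ Finset Pk} [b' = a' ∪ b] · (M_n)_{a,a'} = Σ_{a' ∈ Finset Pk} (S^{n+1})_{(a,b),(a',b')}, where [φ] denotes 1 if φ holds and 0 otherwise. -/
/-- For all `n`, `a`, `b`, `b'`:
`∑_{a'} [b' = a' ∪ b] ⬝ (M n)_{a,a'} = ∑_{a'} (S^(n+1))_{(a,b),(a',b')}`. -/
theorem unrolling_small_step {Pk : Type*} [Fintype Pk] [DecidableEq Pk]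
    (B : Matrix (Finset Pk) (Finset Pk) ℝ)
    (hBnn : ∀ a a', 0 ≤ B a a')
    (hBrow : ∀ a, ∑ a', B a a' = 1)
    (S : Matrix (Finset Pk × Finset Pk) (Finset Pk × Finset Pk) ℝ)
    (hS : ∀ a b a' b', S (a, b) (a', b') = if b' = a ∪ b then B a a' else 0)
    (M : ℕ → Matrix (Finset Pk) (Finset Pk) ℝ)
    (hM0 : M 0 = 1)
    (hMsucc : ∀ n a b, M (n + 1) a b = ∑ c, (if b = a ∪ c then (1 : ℝ) else 0) * (B * M n) a c)
    (n : ℕ) (a b b' : Finset Pk) :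
    ∑ a', (if b' = a' ∪ b then (1 : ℝ) else 0) * M n a a'
      = ∑ a', (S ^ (n + 1)) (a, b) (a', b') := by
  induction n generalizing a b b' with
  | zero =>
    simp only [hM0, zero_add, pow_one, hS, Matrix.one_apply]
    by_cases h : b' = a ∪ b
    · simp [h, hBrow]
    · simp [h]
  | succ n ih =>
    have hR : ∑ a', (S ^ (n + 1 + 1)) (a, b) (a', b')
        = ∑ c, B a c * ∑ a', (S ^ (n + 1)) (c, a ∪ b) (a', b') := by
      simp only [pow_succ' S (n + 1), Matrix.mul_apply, Fintype.sum_prod_type, hS, ite_mul,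
        zero_mul, Finset.sum_ite_eq', Finset.mem_univ, if_true]
      rw [Finset.sum_comm]
      simp only [Finset.mul_sum]
    have hL : ∑ a', (if b' = a' ∪ b then (1 : ℝ) else 0) * M (n + 1) a a'
        = ∑ c, (if b' = (a ∪ c) ∪ b then (1 : ℝ) else 0) * (B * M n) a c := by
      simp only [hMsucc, Finset.mul_sum]
      rw [Finset.sum_comm]
      refine Finset.sum_congr rfl fun c _ => ?_
      rw [Finset.sum_eq_single (a ∪ c)]
      · simp
      · intro d _ hd
        simp [hd]
      · simp
    rw [hR, hL]
    simp only [← ih, Matrix.mul_apply, Finset.mul_sum]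
    rw [Finset.sum_comm]
    refine Finset.sum_congr rfl fun d _ => Finset.sum_congr rfl fun c _ => ?_
    have h : (a ∪ c) ∪ b = c ∪ (a ∪ b) := by
      rw [Finset.union_comm a c, Finset.union_assoc]
    rw [h]
    ring
end

section
/- For all n ∈ ℕ and all a, b ∈ Finset Pk: (M_n)_{a,b} = Σ_{a' ∈ Finset Pk} (S^{n+1})_{(a,∅),(a',b)}. That is, the (n+1)-step behavior of the small-step chain started in state (a,∅) computes the big-step matrix of the n-th unrolling. -/
/-- The `(n+1)`-step behavior of the small-step chain started at `(a, ∅)` computes the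
big-step matrix of the `n`-th unrolling:
`(M n)_{a,b} = ∑_{a'} (S^(n+1))_{(a,∅),(a',b)}`. -/
theorem small_step_characterization {Pk : Type*} [Fintype Pk] [DecidableEq Pk]
    (B : Matrix (Finset Pk) (Finset Pk) ℝ)
    (hBnn : ∀ a a', 0 ≤ B a a')
    (hBrow : ∀ a, ∑ a', B a a' = 1)
    (S : Matrix (Finset Pk × Finset Pk) (Finset Pk × Finset Pk) ℝ)
    (hS : ∀ a b a' b', S (a, b) (a', b') = if b' = a ∪ b then B a a' else 0)
    (M : ℕ → Matrix (Finset Pk) (Finset Pk) ℝ)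
    (hM0 : M 0 = 1)
    (hMsucc : ∀ n a b, M (n + 1) a b = ∑ c, (if b = a ∪ c then (1 : ℝ) else 0) * (B * M n) a c)
    (n : ℕ) (a b : Finset Pk) :
    M n a b = ∑ a', (S ^ (n + 1)) (a, (∅ : Finset Pk)) (a', b) := by
  have key : ∀ (n : ℕ) (a b₀ b : Finset Pk),
      ∑ a', (S ^ (n + 1)) (a, b₀) (a', b) = ∑ c, if b = c ∪ b₀ then M n a c else 0 := by
    intro n
    induction n with
    | zero =>
      intro a b₀ b
      have h2 : ∀ c, (if b = c ∪ b₀ then M 0 a c else 0)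
          = if a = c then (if b = a ∪ b₀ then (1 : ℝ) else 0) else 0 := by
        intro c
        rw [hM0, Matrix.one_apply]
        by_cases h : a = c
        · subst h; simp
        · simp [h]
      rw [Finset.sum_congr rfl fun c _ => h2 c]
      simp only [zero_add, pow_one, hS, Finset.sum_ite_eq, Finset.mem_univ, if_true]
      split_ifs
      · exact hBrow a
      · simp
    | succ n ih =>
      intro a b₀ b
      have hL : ∑ a', (S ^ (n + 1 + 1)) (a, b₀) (a', b)
          = ∑ x, B a x * ∑ a', (S ^ (n + 1)) (x, a ∪ b₀) (a', b) := by
        simp only [pow_succ' S (n + 1), Matrix.mul_apply, Fintype.sum_prod_type, hS, ite_mul,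
          zero_mul, Finset.sum_ite_eq', Finset.mem_univ, if_true]
        rw [Finset.sum_comm]
        simp only [Finset.mul_sum]
      have hR : ∀ c, (if b = c ∪ b₀ then M (n + 1) a c else 0)
          = ∑ d, if c = a ∪ d then (if b = (a ∪ d) ∪ b₀ then (B * M n) a d else 0) else 0 := by
        intro c
        rw [hMsucc]
        by_cases h : b = c ∪ b₀
        · rw [if_pos h]
          refine Finset.sum_congr rfl fun d _ => ?_
          by_cases h' : c = a ∪ d
          · subst h'; simp [h]
          · simp [h']
        · rw [if_neg h]
          symm
          refine Finset.sum_eq_zero fun d _ => ?_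
          by_cases h' : c = a ∪ d
          · subst h'; rw [if_pos rfl, if_neg h]
          · simp [h']
      rw [hL, Finset.sum_congr rfl fun c _ => hR c, Finset.sum_comm]
      simp only [ih, Finset.sum_ite_eq', Finset.mem_univ, if_true, Matrix.mul_apply,
        Finset.mul_sum]
      rw [Finset.sum_comm]
      refine Finset.sum_congr rfl fun d _ => ?_
      have e : d ∪ (a ∪ b₀) = a ∪ d ∪ b₀ := by
        rw [← Finset.union_assoc, Finset.union_comm d a]
      rw [e]
      split_ifs <;> simp
  rw [key]
  simp
end

section
/- Each of the matrices S, U, and the matrix product S·U is monotone in the following sense: for T ∈ {S, U, S·U}, if (T^n)_{(a,b),(a',b')} > 0 for some n ≥ 0, then b ⊆ b'. -/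
open scoped Classical

theorem mono_mul_aux {ι : Type*} [Fintype ι] (r : ι → ι → Prop)
    (htr : ∀ x y z, r x y → r y z → r x z) (M N : Matrix ι ι ℝ)
    (hM : ∀ x y, M x y ≠ 0 → r x y) (hN : ∀ x y, N x y ≠ 0 → r x y) :
    ∀ x y, (M * N) x y ≠ 0 → r x y := by
  intro x y h
  rw [Matrix.mul_apply] at h
  obtain ⟨z, -, hz⟩ := Finset.exists_ne_zero_of_sum_ne_zero h
  exact htr x z y (hM x z (left_ne_zero_of_mul hz)) (hN z y (right_ne_zero_of_mul hz))

theorem mono_pow_aux {ι : Type*} [Fintype ι] [DecidableEq ι] (r : ι → ι → Prop)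
    (hr : ∀ x, r x x) (htr : ∀ x y z, r x y → r y z → r x z) (M : Matrix ι ι ℝ)
    (hM : ∀ x y, M x y ≠ 0 → r x y) (n : ℕ) :
    ∀ x y, (M ^ n) x y ≠ 0 → r x y := by
  induction n with
  | zero =>
    intro x y h
    by_cases hxy : x = y
    · subst hxy; exact hr x
    · exact absurd (by rw [pow_zero, Matrix.one_apply_ne hxy]) h
  | succ k ih =>
    rw [pow_succ]
    exact mono_mul_aux r htr _ _ ih hM

/-- `S`, `U`, and `S·U` are monotone: if `(T^n)_{(a,b),(a',b')} > 0` then `b ⊆ b'`. -/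
theorem monotone_chains {Pk : Type*} [Fintype Pk] [DecidableEq Pk]
    (B : Matrix (Finset Pk) (Finset Pk) ℝ)
    (hBnn : ∀ a a', 0 ≤ B a a')
    (hBrow : ∀ a, ∑ a', B a a' = 1)
    (S U : Matrix (Finset Pk × Finset Pk) (Finset Pk × Finset Pk) ℝ)
    (hS : ∀ a b a' b', S (a, b) (a', b') = if b' = a ∪ b then B a a' else 0)
    (Saturated : Finset Pk × Finset Pk → Prop)
    (hSat : ∀ a b, Saturated (a, b) ↔
      ∀ (n : ℕ) (a' b' : Finset Pk), 0 < (S ^ n) (a, b) (a', b') → b' = b)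
    (hU : ∀ a b a' b', U (a, b) (a', b') =
      if b' = b ∧ ((Saturated (a, b) ∧ a' = ∅) ∨ (¬ Saturated (a, b) ∧ a' = a))
      then 1 else 0) :
    (∀ (n : ℕ) (a b a' b' : Finset Pk), 0 < (S ^ n) (a, b) (a', b') → b ⊆ b') ∧
    (∀ (n : ℕ) (a b a' b' : Finset Pk), 0 < (U ^ n) (a, b) (a', b') → b ⊆ b') ∧
    (∀ (n : ℕ) (a b a' b' : Finset Pk), 0 < ((S * U) ^ n) (a, b) (a', b') → b ⊆ b') := by
  have hr : ∀ x : Finset Pk × Finset Pk, x.2 ⊆ x.2 := fun x => Finset.Subset.refl _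
  have htr : ∀ x y z : Finset Pk × Finset Pk, x.2 ⊆ y.2 → y.2 ⊆ z.2 → x.2 ⊆ z.2 :=
    fun x y z h1 h2 => Finset.Subset.trans h1 h2
  have h1 : ∀ x y, S x y ≠ 0 → x.2 ⊆ y.2 := by
    rintro ⟨a, b⟩ ⟨a', b'⟩ h
    rw [hS] at h
    split_ifs at h with hb
    · subst hb
      exact Finset.subset_union_right
    · exact absurd rfl h
  have h2 : ∀ x y, U x y ≠ 0 → x.2 ⊆ y.2 := by
    rintro ⟨a, b⟩ ⟨a', b'⟩ h
    rw [hU] at h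
    split_ifs at h with hb
    · exact hb.1.symm.subset
    · exact absurd rfl h
  have h3 := mono_mul_aux (fun x y : Finset Pk × Finset Pk => x.2 ⊆ y.2) htr S U h1 h2
  exact ⟨fun n a b a' b' h => mono_pow_aux (fun x y => x.2 ⊆ y.2) hr htr S h1 n _ _ h.ne',
    fun n a b a' b' h => mono_pow_aux (fun x y => x.2 ⊆ y.2) hr htr U h2 n _ _ h.ne',
    fun n a b a' b' h => mono_pow_aux (fun x y => x.2 ⊆ y.2) hr htr (S * U) h3 n _ _ h.ne'⟩
end

section
/- Assume additionally that B_{∅,c} = 1 if c = ∅ and B_{∅,c} = 0 otherwise. Then a state (a,b) ∈ Finset Pk × Finset Pk is absorbing for the matrix S·U if and only if a = ∅; that is, the absorbing states of S·U are exactly the states of the form (∅, b). -/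
open scoped Classical

/-- The absorbing states of `S·U` are exactly the states of the form `(∅, b)`. -/
theorem SU_absorbing_states {Pk : Type*} [Fintype Pk] [DecidableEq Pk]
    (B : Matrix (Finset Pk) (Finset Pk) ℝ)
    (hBnn : ∀ a a', 0 ≤ B a a')
    (hBrow : ∀ a, ∑ a', B a a' = 1)
    (hBempty : ∀ c, B ∅ c = if c = ∅ then 1 else 0)
    (S U : Matrix (Finset Pk × Finset Pk) (Finset Pk × Finset Pk) ℝ)
    (hS : ∀ a b a' b', S (a, b) (a', b') = if b' = a ∪ b then B a a' else 0)
    (Saturated : Finset Pk × Finset Pk → Prop)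
    (hSat : ∀ a b, Saturated (a, b) ↔
      ∀ (n : ℕ) (a' b' : Finset Pk), 0 < (S ^ n) (a, b) (a', b') → b' = b)
    (hU : ∀ a b a' b', U (a, b) (a', b') =
      if b' = b ∧ ((Saturated (a, b) ∧ a' = ∅) ∨ (¬ Saturated (a, b) ∧ a' = a))
      then 1 else 0) :
    ∀ a b : Finset Pk,
      (∀ s', (S * U) (a, b) s' = if s' = (a, b) then 1 else 0) ↔ a = ∅ := by
  have key : ∀ a b a' b', (S * U) (a, b) (a', b') = ∑ c, B a c * U (c, a ∪ b) (a', b') := by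
    intro a b a' b'
    rw [Matrix.mul_apply, Fintype.sum_prod_type]
    refine Finset.sum_congr rfl fun c _ => ?_
    rw [Finset.sum_eq_single (a ∪ b)]
    · rw [hS, if_pos rfl]
    · intro d _ hd
      rw [hS, if_neg hd, zero_mul]
    · intro h
      exact absurd (Finset.mem_univ _) h
  intro a b
  constructor
  · intro h
    by_contra ha
    have h1 := h (a, b)
    rw [if_pos rfl, key] at h1
    rw [Finset.sum_eq_single a] at h1
    · rw [hU] at h1
      split_ifs at h1 with hc
      · obtain ⟨hb, ⟨-, h2⟩ | ⟨hns, -⟩⟩ := hc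
        · exact ha h2
        · rw [mul_one] at h1
          rw [← hb] at hns
          apply hns
          rw [hSat]
          have hz : ∀ c, c ≠ a → B a c = 0 := by
            intro c hca
            have hsum := hBrow a
            rw [← Finset.add_sum_erase _ _ (Finset.mem_univ a), h1] at hsum
            have h0 : ∑ x ∈ Finset.univ.erase a, B a x = 0 := by linarith
            exact (Finset.sum_eq_zero_iff_of_nonneg (fun x _ => hBnn a x)).1 h0 c
              (Finset.mem_erase.2 ⟨hca, Finset.mem_univ _⟩)
          have hst : ∀ s, s ≠ (a, b) → S (a, b) s = 0 := by
            rintro ⟨c, d⟩ hs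
            rw [hS]
            split_ifs with hd
            · apply hz
              rintro rfl
              exact hs (by rw [hd, ← hb])
            · rfl
          have hn : ∀ (n : ℕ) s, s ≠ (a, b) → (S ^ n) (a, b) s = 0 := by
            intro n
            induction n with
            | zero =>
              intro s hs
              rw [pow_zero, Matrix.one_apply_ne hs.symm]
            | succ n ih =>
              intro s hs
              rw [pow_succ, Matrix.mul_apply]
              refine Finset.sum_eq_zero fun t _ => ?_
              by_cases ht : t = (a, b)
              · rw [ht, hst s hs, mul_zero]
              · rw [ih t ht, zero_mul]
          intro n a' b' hpos
          by_contra hne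
          rw [hn n (a', b') (fun e => hne (Prod.ext_iff.1 e).2)] at hpos
          exact lt_irrefl _ hpos
      · simp at h1
    · intro c _ hca
      rw [hU, if_neg, mul_zero]
      rintro ⟨-, ⟨-, h2⟩ | ⟨-, h2⟩⟩
      · exact ha h2
      · exact hca h2.symm
    · intro h
      exact absurd (Finset.mem_univ _) h
  · rintro rfl ⟨a', b'⟩
    rw [key, Finset.sum_eq_single ∅]
    · rw [hBempty, if_pos rfl, one_mul, hU, Finset.empty_union]
      by_cases hs : Saturated (∅, b) <;> simp [hs, Prod.ext_iff, and_comm]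
    · intro c _ hc
      rw [hBempty, if_neg hc, zero_mul]
    · intro h
      exact absurd (Finset.mem_univ _) h
end

section
/- Assume additionally that B_{∅,c} = 1 if c = ∅ and B_{∅,c} = 0 otherwise. Then S·U is an absorbing Markov chain: S·U is stochastic, and from every state (a,b) there exist n ≥ 0 and b' ∈ Finset Pk such that ((S·U)^n)_{(a,b),(∅,b')} > 0 and (∅,b') is an absorbing state of S·U. -/
open scoped Classical

/-- `S·U` is an absorbing Markov chain: it is stochastic, and every state can reach an
absorbing state of the form `(∅, b')`. -/
theorem SU_absorbing_chain {Pk : Type*} [Fintype Pk] [DecidableEq Pk]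
    (B : Matrix (Finset Pk) (Finset Pk) ℝ)
    (hBnn : ∀ a a', 0 ≤ B a a')
    (hBrow : ∀ a, ∑ a', B a a' = 1)
    (hBempty : ∀ c, B ∅ c = if c = ∅ then 1 else 0)
    (S U : Matrix (Finset Pk × Finset Pk) (Finset Pk × Finset Pk) ℝ)
    (hS : ∀ a b a' b', S (a, b) (a', b') = if b' = a ∪ b then B a a' else 0)
    (Saturated : Finset Pk × Finset Pk → Prop)
    (hSat : ∀ a b, Saturated (a, b) ↔
      ∀ (n : ℕ) (a' b' : Finset Pk), 0 < (S ^ n) (a, b) (a', b') → b' = b)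
    (hU : ∀ a b a' b', U (a, b) (a', b') =
      if b' = b ∧ ((Saturated (a, b) ∧ a' = ∅) ∨ (¬ Saturated (a, b) ∧ a' = a))
      then 1 else 0) :
    ((∀ p q, 0 ≤ (S * U) p q) ∧ (∀ p : Finset Pk × Finset Pk, ∑ q, (S * U) p q = 1)) ∧
    (∀ a b : Finset Pk, ∃ (n : ℕ) (b' : Finset Pk),
      0 < ((S * U) ^ n) (a, b) ((∅ : Finset Pk), b') ∧
      (∀ s', (S * U) ((∅ : Finset Pk), b') s' =
        if s' = ((∅ : Finset Pk), b') then 1 else 0)) := by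
  have hSnn : ∀ p q, 0 ≤ S p q := by
    rintro ⟨a, b⟩ ⟨a', b'⟩
    rw [hS]
    split_ifs
    · exact hBnn _ _
    · exact le_rfl
  have hSrow : ∀ p, ∑ q, S p q = 1 := by
    rintro ⟨a, b⟩
    rw [Fintype.sum_prod_type, ← hBrow a]
    refine Finset.sum_congr rfl fun a' _ => ?_
    rw [Finset.sum_eq_single (a ∪ b)]
    · rw [hS, if_pos rfl]
    · intro b' _ h
      rw [hS, if_neg h]
    · intro h
      exact absurd (Finset.mem_univ _) h
  obtain ⟨u, hu⟩ : ∃ u : Finset Pk × Finset Pk → Finset Pk × Finset Pk,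
      ∀ q, (Saturated q → u q = (∅, q.2)) ∧ (¬ Saturated q → u q = q) :=
    ⟨fun q => if Saturated q then (∅, q.2) else q, fun q =>
      ⟨fun h => if_pos h, fun h => if_neg h⟩⟩
  have hU' : ∀ r q, U r q = if q = u r then 1 else 0 := by
    rintro ⟨a, b⟩ ⟨a', b'⟩
    rw [hU]
    by_cases h : Saturated (a, b)
    · rw [(hu _).1 h]
      simp [h, Prod.ext_iff, and_comm]
    · rw [(hu _).2 h]
      simp [h, Prod.ext_iff, and_comm]
  have hUnn : ∀ p q, 0 ≤ U p q := by
    intro p q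
    rw [hU']
    split_ifs <;> norm_num
  have hUrow : ∀ p, ∑ q, U p q = 1 := by
    intro p
    simp [hU']
  have hTnn : ∀ p q, 0 ≤ (S * U) p q := by
    intro p q
    rw [Matrix.mul_apply]
    exact Finset.sum_nonneg fun r _ => mul_nonneg (hSnn _ _) (hUnn _ _)
  have hTrow : ∀ p : Finset Pk × Finset Pk, ∑ q, (S * U) p q = 1 := by
    intro p
    simp only [Matrix.mul_apply]
    rw [Finset.sum_comm]
    simp only [← Finset.mul_sum, hUrow, mul_one, hSrow]
  have hstep : ∀ p q, 0 < S p q → 0 < (S * U) p (u q) := by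
    intro p q h
    rw [Matrix.mul_apply]
    refine Finset.sum_pos' (fun r _ => mul_nonneg (hSnn _ _) (hUnn _ _))
      ⟨q, Finset.mem_univ _, ?_⟩
    rw [hU', if_pos rfl, mul_one]
    exact h
  have hpos : ∀ (n : ℕ) p q, 0 < (S ^ (n + 1)) p q →
      ∃ r, 0 < S p r ∧ 0 < (S ^ n) r q := by
    intro n p q h
    have hSn : ∀ p q, 0 ≤ (S ^ n) p q := by
      clear h p q
      induction n with
      | zero =>
        intro p q
        rw [pow_zero, Matrix.one_apply]
        split_ifs <;> norm_num
      | succ n ih =>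
        intro p q
        rw [pow_succ, Matrix.mul_apply]
        exact Finset.sum_nonneg fun r _ => mul_nonneg (ih _ _) (hSnn _ _)
    by_contra hc
    push Not at hc
    rw [pow_succ', Matrix.mul_apply] at h
    refine h.ne' (Finset.sum_eq_zero fun r _ => ?_)
    rcases (hSnn p r).lt_or_eq with h1 | h1
    · rw [le_antisymm (hc r h1) (hSn _ _), mul_zero]
    · rw [← h1, zero_mul]
  have hSpow : ∀ (n : ℕ) p r q, 0 < S p r → 0 < (S ^ n) r q → 0 < (S ^ (n + 1)) p q := by
    intro n p r q h1 h2
    have hSn : ∀ p q, 0 ≤ (S ^ n) p q := by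
      clear h2
      induction n with
      | zero =>
        intro p q
        rw [pow_zero, Matrix.one_apply]
        split_ifs <;> norm_num
      | succ n ih =>
        intro p q
        rw [pow_succ, Matrix.mul_apply]
        exact Finset.sum_nonneg fun r _ => mul_nonneg (ih _ _) (hSnn _ _)
    rw [pow_succ', Matrix.mul_apply]
    exact Finset.sum_pos' (fun r _ => mul_nonneg (hSnn _ _) (hSn _ _))
      ⟨r, Finset.mem_univ _, mul_pos h1 h2⟩
  have hTpow : ∀ p q, Relation.ReflTransGen (fun p q => 0 < (S * U) p q) p q →
      ∃ n : ℕ, 0 < ((S * U) ^ n) p q := by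
    intro p q h
    have hTn : ∀ (n : ℕ) p q, 0 ≤ ((S * U) ^ n) p q := by
      intro n
      induction n with
      | zero =>
        intro p q
        rw [pow_zero, Matrix.one_apply]
        split_ifs <;> norm_num
      | succ n ih =>
        intro p q
        rw [pow_succ, Matrix.mul_apply]
        exact Finset.sum_nonneg fun r _ => mul_nonneg (ih _ _) (hTnn _ _)
    induction h with
    | refl => exact ⟨0, by simp⟩
    | @tail r q _ h2 ih =>
      obtain ⟨n, hn⟩ := ih
      refine ⟨n + 1, ?_⟩
      rw [pow_succ, Matrix.mul_apply]
      exact Finset.sum_pos' (fun r _ => mul_nonneg (hTn _ _ _) (hTnn _ _))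
        ⟨r, Finset.mem_univ _, mul_pos hn h2⟩
  have hS2 : ∀ a b a' b', 0 < S (a, b) (a', b') → b' = a ∪ b := by
    intro a b a' b' h
    by_contra hc
    rw [hS, if_neg hc] at h
    exact lt_irrefl _ h
  -- a non-saturated state reaches an empty one or a strictly larger accumulator
  have key : ∀ (n : ℕ) (a b a' b' : Finset Pk), 0 < (S ^ n) (a, b) (a', b') → b' ≠ b →
      ∃ c d, Relation.ReflTransGen (fun p q => 0 < (S * U) p q) (a, b) (c, d) ∧
        (c = ∅ ∨ b ⊂ d) := by
    intro n
    induction n with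
    | zero =>
      intro a b a' b' h hne
      rw [pow_zero, Matrix.one_apply_ne (by
        intro h
        exact hne (Prod.ext_iff.1 h).2.symm)] at h
      exact absurd h (lt_irrefl _)
    | succ n ih =>
      intro a b a' b' h hne
      obtain ⟨⟨a1, b1⟩, h1, h2⟩ := hpos _ _ _ h
      have hT := hstep _ _ h1
      by_cases hs : Saturated (a1, b1)
      · rw [(hu _).1 hs] at hT
        exact ⟨∅, b1, Relation.ReflTransGen.single hT, Or.inl rfl⟩
      · rw [(hu _).2 hs] at hT
        by_cases hb : b1 = b
        · subst hb
          obtain ⟨c, d, h3, h4⟩ := ih _ _ _ _ h2 hne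
          exact ⟨c, d, Relation.ReflTransGen.head hT h3, h4⟩
        · refine ⟨a1, b1, Relation.ReflTransGen.single hT, Or.inr ?_⟩
          refine Finset.ssubset_iff_subset_ne.2 ⟨?_, fun h => hb h.symm⟩
          rw [hS2 _ _ _ _ h1]
          exact Finset.subset_union_right
  have main : ∀ (k : ℕ) (a b : Finset Pk), Fintype.card Pk - b.card = k →
      ∃ b', Relation.ReflTransGen (fun p q => 0 < (S * U) p q) (a, b) (∅, b') := by
    intro k
    induction k using Nat.strong_induction_on with
    | _ k ih =>
      intro a b hk
      by_cases hs : Saturated (a, b)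
      · obtain ⟨⟨a1, b1⟩, -, h1⟩ : ∃ q ∈ Finset.univ, 0 < S (a, b) q :=
          Finset.exists_lt_of_sum_lt (by simp [hSrow])
        have hs1 : Saturated (a1, b1) := by
          have hb : b1 = b := (hSat a b).1 hs 1 a1 b1 (by simpa using h1)
          subst hb
          refine (hSat _ _).2 fun n a' b' h => ?_
          exact (hSat _ _).1 hs (n + 1) a' b' (hSpow _ _ _ _ h1 h)
        have hT := hstep _ _ h1
        rw [(hu _).1 hs1] at hT
        exact ⟨b1, Relation.ReflTransGen.single hT⟩
      · have hs' := hs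
        rw [hSat] at hs'
        push Not at hs'
        obtain ⟨n, a', b', h, hne⟩ := hs'
        obtain ⟨c, d, h1, h2⟩ := key n a b a' b' h hne
        rcases h2 with rfl | h2
        · exact ⟨d, h1⟩
        · have hc := Finset.card_lt_card h2
          have hd := Finset.card_le_univ d
          obtain ⟨b'', h3⟩ := ih (Fintype.card Pk - d.card) (by omega) c d rfl
          exact ⟨b'', h1.trans h3⟩
  refine ⟨⟨hTnn, hTrow⟩, fun a b => ?_⟩
  obtain ⟨b', h⟩ := main _ a b rfl
  obtain ⟨n, hn⟩ := hTpow _ _ h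
  refine ⟨n, b', hn, fun s' => ?_⟩
  have hue : u (∅, b') = (∅, b') := by
    by_cases hs : Saturated (∅, b')
    · exact (hu _).1 hs
    · exact (hu _).2 hs
  rw [Matrix.mul_apply, Finset.sum_eq_single ((∅ : Finset Pk), b')]
  · rw [hS, hBempty, hU', hue]
    simp
  · rintro ⟨c, d⟩ _ hne
    have : S (∅, b') (c, d) = 0 := by
      rw [hS, hBempty]
      by_cases hd : d = ∅ ∪ b'
      · rw [if_pos hd, if_neg]
        rintro rfl
        exact hne (by simp [hd])
      · rw [if_neg hd]
    rw [this, zero_mul]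
  · intro h
    exact absurd (Finset.mem_univ _) h
end

section
/- (Closed form) Assume additionally that B_{∅,c} = 1 if c = ∅ and B_{∅,c} = 0 otherwise. Then for all a, b, b' ∈ Finset Pk, the sequence n ↦ Σ_{a' ∈ Finset Pk} (S^n)_{(a,b),(a',b')} converges as n → ∞, the sequence n ↦ ((S·U)^n)_{(a,b),(∅,b')} converges as n → ∞, and the two limits are equal. -/
open scoped Classical


lemma aux_pos_mul {ι : Type*} [Fintype ι] {M N : Matrix ι ι ℝ} (hM : ∀ i j, 0 ≤ M i j)
    (hN : ∀ i j, 0 ≤ N i j) {i j k : ι} (h1 : 0 < M i j) (h2 : 0 < N j k) :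
    0 < (M * N) i k := by
  rw [Matrix.mul_apply]
  exact Finset.sum_pos' (fun x _ => mul_nonneg (hM _ _) (hN _ _))
    ⟨j, Finset.mem_univ _, mul_pos h1 h2⟩

lemma aux_pos_mulVec {ι : Type*} [Fintype ι] {M : Matrix ι ι ℝ} (hM : ∀ i j, 0 ≤ M i j)
    {v : ι → ℝ} (hv : ∀ i, 0 ≤ v i) (i : ι) :
    0 < (M.mulVec v) i ↔ ∃ j, 0 < M i j ∧ 0 < v j := by
  constructor
  · intro h
    by_contra! hc
    refine absurd h (not_lt.mpr ?_)
    refine Finset.sum_nonpos (fun j _ => ?_)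
    rcases (hM i j).eq_or_lt with h0 | h0
    · simp [← h0]
    · have : v j = 0 := le_antisymm (hc j h0) (hv j)
      simp [this]
  · rintro ⟨j, h1, h2⟩
    exact Finset.sum_pos' (fun x _ => mul_nonneg (hM _ _) (hv _))
      ⟨j, Finset.mem_univ _, mul_pos h1 h2⟩

lemma aux_mulVec_mono {ι : Type*} [Fintype ι] {M : Matrix ι ι ℝ} (hM : ∀ i j, 0 ≤ M i j)
    {v w : ι → ℝ} (h : ∀ i, v i ≤ w i) (i : ι) : (M.mulVec v) i ≤ (M.mulVec w) i :=
  Finset.sum_le_sum (fun j _ => mul_le_mul_of_nonneg_left (h j) (hM i j))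

lemma aux_pow {ι : Type*} [Fintype ι] [DecidableEq ι] {M : Matrix ι ι ℝ}
    (hM : ∀ i j, 0 ≤ M i j) (h1 : ∀ c : ℝ, M.mulVec (fun _ => c) = fun _ => c) (n : ℕ) :
    (∀ i j, 0 ≤ (M ^ n) i j) ∧ ∀ c : ℝ, (M ^ n).mulVec (fun _ => c) = fun _ => c := by
  induction n with
  | zero =>
    refine ⟨fun i j => ?_, fun c => by simp⟩
    rw [pow_zero, Matrix.one_apply]; split_ifs <;> norm_num
  | succ n ih =>
    refine ⟨fun i j => ?_, fun c => ?_⟩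
    · rw [pow_succ, Matrix.mul_apply]
      exact Finset.sum_nonneg (fun k _ => mul_nonneg (ih.1 _ _) (hM _ _))
    · rw [pow_succ, ← Matrix.mulVec_mulVec, h1, ih.2]

/-- The mass outside an absorbing reachable set vanishes. -/
lemma aux_absorb {ι : Type*} [Fintype ι] [DecidableEq ι] {M : Matrix ι ι ℝ}
    (hM : ∀ i j, 0 ≤ M i j) (h1 : ∀ c : ℝ, M.mulVec (fun _ => c) = fun _ => c)
    (q : ι → ℝ) (hq : ∀ i, 0 ≤ q i) (hdec : ∀ i, (M.mulVec q) i ≤ q i)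
    (hreach : ∀ i, ∃ n j, 0 < (M ^ n) i j ∧ q j = 0) (i : ι) :
    Filter.Tendsto (fun n : ℕ => ((M ^ n).mulVec q) i) Filter.atTop (nhds 0) := by
  have hnn : ∀ n i, 0 ≤ ((M ^ n).mulVec q) i := fun n i =>
    Finset.sum_nonneg (fun k _ => mul_nonneg ((aux_pow hM h1 n).1 _ _) (hq _))
  have hanti : ∀ i, Antitone (fun n : ℕ => ((M ^ n).mulVec q) i) := fun i =>
    antitone_nat_of_succ_le (fun n => by
      rw [pow_succ, ← Matrix.mulVec_mulVec]
      exact aux_mulVec_mono (aux_pow hM h1 n).1 hdec i)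
  have hlim : ∀ i, ∃ r, Filter.Tendsto (fun n : ℕ => ((M ^ n).mulVec q) i)
      Filter.atTop (nhds r) := fun i =>
    ⟨_, tendsto_atTop_ciInf (hanti i) ⟨0, by rintro _ ⟨n, rfl⟩; exact hnn n i⟩⟩
  choose r hr using hlim
  have hr0 : ∀ i, 0 ≤ r i := fun i => ge_of_tendsto' (hr i) (fun n => hnn n i)
  have hrq : ∀ i, r i ≤ q i := fun i => by
    refine le_of_tendsto' (hr i) (fun n => ?_)
    simpa using hanti i (Nat.zero_le n)
  have hfix : ∀ N i, ((M ^ N).mulVec r) i = r i := by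
    intro N i
    have e1 : Filter.Tendsto (fun n : ℕ => ((M ^ (n + N)).mulVec q) i) Filter.atTop
        (nhds (r i)) := (Filter.tendsto_add_atTop_iff_nat N).2 (hr i)
    have e2 : Filter.Tendsto (fun n : ℕ => ((M ^ (n + N)).mulVec q) i) Filter.atTop
        (nhds (((M ^ N).mulVec r) i)) := by
      have : (fun n : ℕ => ((M ^ (n + N)).mulVec q) i) =
          fun n => ∑ j, (M ^ N) i j * ((M ^ n).mulVec q) j := by
        funext n
        rw [add_comm, pow_add, ← Matrix.mulVec_mulVec]; rfl
      rw [this]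
      exact tendsto_finsetSum _ (fun j _ => (hr j).const_mul _)
    exact tendsto_nhds_unique e2 e1
  have : Nonempty ι := ⟨i⟩
  obtain ⟨s, hs⟩ := Finite.exists_max r
  have hs0 : r s ≤ 0 := by
    by_contra! hpos
    obtain ⟨N, j, hj, hqj⟩ := hreach s
    have hlt : ((M ^ N).mulVec r) s < ((M ^ N).mulVec (fun _ => r s)) s := by
      refine Finset.sum_lt_sum (fun k _ => mul_le_mul_of_nonneg_left (hs k)
        ((aux_pow hM h1 N).1 _ _)) ⟨j, Finset.mem_univ _, ?_⟩
      refine mul_lt_mul_of_pos_left ?_ hj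
      have := hrq j
      linarith
    rw [hfix, (aux_pow hM h1 N).2] at hlt
    exact lt_irrefl _ hlt
  have : r i = 0 := le_antisymm ((hs i).trans hs0) (hr0 i)
  rw [← this]; exact hr i

/-- Closed form: `lim_n ∑_{a'} (S^n)_{(a,b),(a',b')}` exists, `lim_n ((S·U)^n)_{(a,b),(∅,b')}`
exists, and the two limits agree. -/
theorem closed_form {Pk : Type*} [Fintype Pk] [DecidableEq Pk]
    (B : Matrix (Finset Pk) (Finset Pk) ℝ)
    (hBnn : ∀ a a', 0 ≤ B a a')
    (hBrow : ∀ a, ∑ a', B a a' = 1)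
    (hBempty : ∀ c, B ∅ c = if c = ∅ then 1 else 0)
    (S U : Matrix (Finset Pk × Finset Pk) (Finset Pk × Finset Pk) ℝ)
    (hS : ∀ a b a' b', S (a, b) (a', b') = if b' = a ∪ b then B a a' else 0)
    (Saturated : Finset Pk × Finset Pk → Prop)
    (hSat : ∀ a b, Saturated (a, b) ↔
      ∀ (n : ℕ) (a' b' : Finset Pk), 0 < (S ^ n) (a, b) (a', b') → b' = b)
    (hU : ∀ a b a' b', U (a, b) (a', b') =
      if b' = b ∧ ((Saturated (a, b) ∧ a' = ∅) ∨ (¬ Saturated (a, b) ∧ a' = a))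
      then 1 else 0) :
    ∀ a b b' : Finset Pk, ∃ L : ℝ,
      Filter.Tendsto (fun n : ℕ => ∑ a', (S ^ n) (a, b) (a', b'))
        Filter.atTop (nhds L) ∧
      Filter.Tendsto (fun n : ℕ => ((S * U) ^ n) (a, b) ((∅ : Finset Pk), b'))
        Filter.atTop (nhds L) := by
  have hSnn : ∀ s t, 0 ≤ S s t := by
    rintro ⟨a, b⟩ ⟨a', b'⟩
    rw [hS]; split_ifs
    · exact hBnn _ _
    · exact le_rfl
  have hUnn : ∀ s t, 0 ≤ U s t := by
    rintro ⟨a, b⟩ ⟨a', b'⟩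
    rw [hU]; split_ifs <;> norm_num
  have hSv : ∀ (w : Finset Pk × Finset Pk → ℝ) a b,
      (S.mulVec w) (a, b) = ∑ a', B a a' * w (a', a ∪ b) := by
    intro w a b
    simp only [Matrix.mulVec, dotProduct, Fintype.sum_prod_type, hS]
    refine Finset.sum_congr rfl (fun a' _ => ?_)
    rw [Finset.sum_eq_single (a ∪ b)]
    · simp
    · intro c _ hc; simp [hc]
    · simp
  have hUsat : ∀ (w : Finset Pk × Finset Pk → ℝ) a b, Saturated (a, b) →
      (U.mulVec w) (a, b) = w (∅, b) := by
    intro w a b h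
    simp only [Matrix.mulVec, dotProduct]
    rw [Finset.sum_eq_single (∅, b)]
    · simp [hU, h]
    · rintro ⟨a', b'⟩ _ hc
      have : ¬ (b' = b ∧ a' = ∅) := fun hh => hc (by rw [hh.1, hh.2])
      simp [hU, h, this]
    · simp
  have hUuns : ∀ (w : Finset Pk × Finset Pk → ℝ) a b, ¬ Saturated (a, b) →
      (U.mulVec w) (a, b) = w (a, b) := by
    intro w a b h
    simp only [Matrix.mulVec, dotProduct]
    rw [Finset.sum_eq_single (a, b)]
    · simp [hU, h]
    · rintro ⟨a', b'⟩ _ hc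
      have : ¬ (b' = b ∧ a' = a) := fun hh => hc (by rw [hh.1, hh.2])
      simp [hU, h, this]
    · simp
  have hS1 : ∀ c : ℝ, S.mulVec (fun _ => c) = fun _ => c := by
    intro c; funext ⟨a, b⟩
    rw [hSv, ← Finset.sum_mul, hBrow, one_mul]
  have hU1 : ∀ c : ℝ, U.mulVec (fun _ => c) = fun _ => c := by
    intro c; funext ⟨a, b⟩
    by_cases h : Saturated (a, b)
    · rw [hUsat _ _ _ h]
    · rw [hUuns _ _ _ h]
  have hTnn : ∀ s t, 0 ≤ (S * U) s t := fun s t => by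
    rw [Matrix.mul_apply]
    exact Finset.sum_nonneg (fun k _ => mul_nonneg (hSnn _ _) (hUnn _ _))
  have hT1 : ∀ c : ℝ, (S * U).mulVec (fun _ => c) = fun _ => c := by
    intro c; rw [← Matrix.mulVec_mulVec, hU1, hS1]
  have hSe : ∀ (w : Finset Pk × Finset Pk → ℝ) b, (S.mulVec w) (∅, b) = w (∅, b) := by
    intro w b
    rw [hSv]; simp [hBempty]
  have hUe : ∀ (w : Finset Pk × Finset Pk → ℝ) b, (U.mulVec w) (∅, b) = w (∅, b) := by
    intro w b
    by_cases h : Saturated (∅, b)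
    · rw [hUsat _ _ _ h]
    · rw [hUuns _ _ _ h]
  have hTe : ∀ (w : Finset Pk × Finset Pk → ℝ) b,
      ((S * U).mulVec w) (∅, b) = w (∅, b) := by
    intro w b
    rw [← Matrix.mulVec_mulVec, hSe, hUe]
  have hSne : ∀ (n : ℕ) (w : Finset Pk × Finset Pk → ℝ) b,
      ((S ^ n).mulVec w) (∅, b) = w (∅, b) := by
    intro n
    induction n with
    | zero => intro w b; simp
    | succ n ih => intro w b; rw [pow_succ, ← Matrix.mulVec_mulVec, ih, hSe]
  have hSpow := fun n => aux_pow hSnn hS1 n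
  have hTpow := fun n => aux_pow hTnn hT1 n
  have hmarg : ∀ (b' : Finset Pk) (n : ℕ),
      ((S * U) ^ n).mulVec (fun s => if s.2 = b' then (1 : ℝ) else 0) =
      (S ^ n).mulVec (fun s => if s.2 = b' then (1 : ℝ) else 0) := by
    intro b' n
    induction n with
    | zero => simp
    | succ n ih =>
      rw [pow_succ', pow_succ', ← Matrix.mulVec_mulVec, ih, ← Matrix.mulVec_mulVec,
        ← Matrix.mulVec_mulVec]
      congr 1
      funext ⟨a, b⟩
      by_cases h : Saturated (a, b)
      · rw [hUsat _ _ _ h, hSne]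
        have h2 := (hSat a b).1 h n
        have h3 := congrFun ((hSpow n).2 (if b = b' then (1 : ℝ) else 0)) (a, b)
        simp only at h3 ⊢
        rw [← h3]
        refine Finset.sum_congr rfl ?_
        rintro ⟨c, d⟩ _
        rcases ((hSpow n).1 (a, b) (c, d)).eq_or_lt with h0 | h0
        · simp [← h0]
        · simp [h2 c d h0]
      · rw [hUuns _ _ _ h]
  have hmono : ∀ (n : ℕ) (a b a' b' : Finset Pk), 0 < (S ^ n) (a, b) (a', b') → b ⊆ b' := by
    intro n
    induction n with
    | zero =>
      intro a b a' b' h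
      rw [pow_zero, Matrix.one_apply] at h
      split_ifs at h with h'
      · simp only [Prod.mk.injEq] at h'
        rw [h'.2]
      · exact absurd h (lt_irrefl _)
    | succ n ih =>
      intro a b a' b' h
      rw [pow_succ', Matrix.mul_apply] at h
      obtain ⟨⟨c, d⟩, h1, h2⟩ := (aux_pos_mulVec hSnn
        (v := fun j => (S ^ n) j (a', b')) (fun j => (hSpow n).1 _ _) (a, b)).1 h
      have h3 := ih _ _ _ _ h2
      rw [hS] at h1
      split_ifs at h1 with h'
      · rw [h'] at h3
        exact Finset.subset_union_right.trans h3
      · exact absurd h1 (lt_irrefl _)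
  have hreach : ∀ b a : Finset Pk, ∃ (N : ℕ) (c : Finset Pk),
      0 < ((S * U) ^ N) (a, b) (∅, c) := by
    intro b
    induction b using WellFoundedGT.induction with
    | ind b ih =>
    intro a
    by_cases h : Saturated (a, b)
    · have h1 : 0 < (S.mulVec (fun _ => (1 : ℝ))) (a, b) := by rw [hS1]; norm_num
      obtain ⟨⟨c, d⟩, h2, -⟩ := (aux_pos_mulVec hSnn (fun _ => zero_le_one) _).1 h1
      have hd : d = b := (hSat a b).1 h 1 c d (by rwa [pow_one])
      subst hd
      have hcs : Saturated (c, d) := by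
        rw [hSat]
        intro n a' b' h3
        refine (hSat a d).1 h (n + 1) a' b' ?_
        rw [pow_succ']
        exact aux_pos_mul hSnn (hSpow n).1 h2 h3
      refine ⟨1, d, ?_⟩
      rw [pow_one]
      refine aux_pos_mul hSnn hUnn h2 ?_
      simp [hU, hcs]
    · have h' := h
      rw [hSat] at h'
      push Not at h'
      obtain ⟨n, a', b', h1, h2⟩ := h'
      have h3 := hmono _ _ _ _ _ h1
      have hvnn : ∀ s : Finset Pk × Finset Pk, 0 ≤ (if s.2 = b' then (1 : ℝ) else 0) := by
        intro s; split_ifs <;> norm_num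
      have h4 : 0 < ((S ^ n).mulVec (fun s => if s.2 = b' then (1 : ℝ) else 0)) (a, b) :=
        (aux_pos_mulVec (hSpow n).1 hvnn _).2 ⟨(a', b'), h1, by simp⟩
      rw [← hmarg] at h4
      obtain ⟨⟨c, d⟩, h5, h6⟩ := (aux_pos_mulVec (hTpow n).1 hvnn _).1 h4
      have hd : d = b' := by
        by_contra hne
        simp [hne] at h6
      subst hd
      obtain ⟨N, e, h7⟩ := ih d (lt_of_le_of_ne h3 (Ne.symm h2)) c
      refine ⟨n + N, e, ?_⟩
      rw [pow_add]
      exact aux_pos_mul (hTpow n).1 (hTpow N).1 h5 h7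
  intro a b b'
  have hq0 := aux_absorb hTnn hT1 (fun s => if s.1 = ∅ then (0 : ℝ) else 1)
    (fun s => by split_ifs <;> norm_num)
    (by
      rintro ⟨x, y⟩
      by_cases hx : x = ∅
      · subst hx; rw [hTe]
      · have h1 := aux_mulVec_mono hTnn
          (v := fun s : Finset Pk × Finset Pk => if s.1 = ∅ then (0 : ℝ) else 1)
          (w := fun _ => 1) (fun s => by split_ifs <;> norm_num) (x, y)
        rw [hT1] at h1
        simpa [hx] using h1)
    (by
      rintro ⟨x, y⟩
      obtain ⟨N, c, h⟩ := hreach y x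
      exact ⟨N, (∅, c), h, by simp⟩) (a, b)
  have he : ∀ n : ℕ, ((S * U) ^ n) (a, b) (∅, b') =
      (((S * U) ^ n).mulVec (fun s => if s = (∅, b') then (1 : ℝ) else 0)) (a, b) := by
    intro n; simp [Matrix.mulVec, dotProduct]
  have hf : ∀ n : ℕ, ∑ a', (S ^ n) (a, b) (a', b') =
      (((S * U) ^ n).mulVec (fun s => if s.2 = b' then (1 : ℝ) else 0)) (a, b) := by
    intro n; rw [hmarg]; simp [Matrix.mulVec, dotProduct, Fintype.sum_prod_type]
  have hmon : Monotone (fun n : ℕ => ((S * U) ^ n) (a, b) ((∅ : Finset Pk), b')) := by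
    refine monotone_nat_of_le_succ (fun n => ?_)
    rw [he, he, pow_succ, ← Matrix.mulVec_mulVec]
    refine aux_mulVec_mono (hTpow n).1 ?_ _
    rintro ⟨x, y⟩
    by_cases hx : x = ∅
    · subst hx; rw [hTe]
    · simp only [Prod.mk.injEq, hx, false_and, if_false]
      exact Finset.sum_nonneg (fun k _ => mul_nonneg (hTnn _ _) (by dsimp only; split_ifs <;> norm_num))
  have hbdd : BddAbove (Set.range
      (fun n : ℕ => ((S * U) ^ n) (a, b) ((∅ : Finset Pk), b'))) := by
    refine ⟨1, ?_⟩
    rintro _ ⟨n, rfl⟩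
    dsimp only
    rw [he]
    have h1 := aux_mulVec_mono (hTpow n).1
      (v := fun s : Finset Pk × Finset Pk => if s = (∅, b') then (1 : ℝ) else 0)
      (w := fun _ => 1) (fun s => by split_ifs <;> norm_num) (a, b)
    rwa [(hTpow n).2] at h1
  have hlim := tendsto_atTop_ciSup hmon hbdd
  refine ⟨_, ?_, hlim⟩
  have hup := hlim.add hq0
  rw [add_zero] at hup
  refine tendsto_of_tendsto_of_tendsto_of_le_of_le hlim hup ?_ ?_
  · intro n
    dsimp only
    rw [he, hf]
    refine aux_mulVec_mono (hTpow n).1 ?_ _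
    rintro ⟨x, y⟩
    by_cases hx : x = ∅ <;> by_cases hy : y = b' <;> simp [hx, hy]
  · intro n
    dsimp only
    rw [he, hf, ← Pi.add_apply, ← Matrix.mulVec_add]
    refine aux_mulVec_mono (hTpow n).1 ?_ _
    rintro ⟨x, y⟩
    by_cases hx : x = ∅ <;> by_cases hy : y = b' <;> simp [hx, hy]
end

section
/- If M is substochastic and every state can reach a defective state, then the matrix I − M is invertible (where I is the identity matrix). -/
/-- If `M` is substochastic and every state can reach a defective state,
then `I - M` is invertible. -/
theorem sub_one_sub_invertible {S : Type*} [Fintype S] [DecidableEq S]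
    (M : Matrix S S ℝ)
    (hnn : ∀ s t, 0 ≤ M s t)
    (hsub : ∀ s, ∑ t, M s t ≤ 1)
    (hreach : ∀ s, ∃ (n : ℕ) (t : S), (∑ u, M t u < 1) ∧ 0 < (M ^ n) s t) :
    IsUnit (1 - M) := by
  rw [Matrix.isUnit_iff_isUnit_det, isUnit_iff_ne_zero]
  intro hdet
  obtain ⟨v, hv0, hv⟩ := Matrix.exists_mulVec_eq_zero_iff.mpr hdet
  have hfix : ∀ s, v s = ∑ t, M s t * v t := by
    intro s
    have h := congrFun hv s
    rw [Matrix.sub_mulVec, Matrix.one_mulVec] at h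
    simp only [Pi.sub_apply, Pi.zero_apply, Matrix.mulVec, dotProduct] at h
    linarith
  obtain ⟨i, hi⟩ := Function.ne_iff.mp hv0
  obtain ⟨s₀, -, hs₀⟩ := Finset.exists_max_image Finset.univ (fun s => |v s|) ⟨i, Finset.mem_univ i⟩
  set m := |v s₀| with hm
  have hmax : ∀ t, |v t| ≤ m := fun t => hs₀ t (Finset.mem_univ t)
  have hpos : 0 < m := lt_of_lt_of_le (abs_pos.mpr hi) (hmax i)
  have hle : ∀ s, |v s| ≤ ∑ t, M s t * |v t| := by
    intro s
    calc |v s| = |∑ t, M s t * v t| := by rw [← hfix s]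
      _ ≤ ∑ t, |M s t * v t| := Finset.abs_sum_le_sum_abs _ _
      _ = ∑ t, M s t * |v t| := by simp only [abs_mul, abs_of_nonneg (hnn _ _)]
  have hterm : ∀ s t, M s t * |v t| ≤ M s t * m := fun s t =>
    mul_le_mul_of_nonneg_left (hmax t) (hnn s t)
  have hrow : ∀ s, |v s| = m → 1 ≤ ∑ t, M s t := by
    intro s hs
    have h1 := hle s
    have h2 := Finset.sum_le_sum (fun t (_ : t ∈ Finset.univ) => hterm s t)
    rw [← Finset.sum_mul] at h2
    by_contra! h
    nlinarith
  have hstep : ∀ s t, |v s| = m → 0 < M s t → |v t| = m := by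
    intro s t hs hst
    by_contra hne
    have hlt : |v t| < m := lt_of_le_of_ne (hmax t) hne
    have h2 : ∑ u, M s u * |v u| < ∑ u, M s u * m :=
      Finset.sum_lt_sum (fun u _ => hterm s u)
        ⟨t, Finset.mem_univ t, mul_lt_mul_of_pos_left hlt hst⟩
    rw [← Finset.sum_mul] at h2
    have h1 := hle s
    nlinarith [hsub s]
  have hpow : ∀ (n : ℕ) (s t : S), |v s| = m → 0 < (M ^ n) s t → |v t| = m := by
    intro n
    induction n with
    | zero =>
      intro s t hs h
      rw [pow_zero, Matrix.one_apply] at h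
      split_ifs at h with hst
      · rwa [← hst]
      · exact absurd h (lt_irrefl _)
    | succ n ih =>
      intro s t hs h
      rw [pow_succ', Matrix.mul_apply] at h
      obtain ⟨u, -, hu⟩ := Finset.exists_lt_of_sum_lt
        (s := Finset.univ) (f := fun _ : S => (0 : ℝ)) (by simpa using h)
      have hsu : 0 < M s u := by
        refine lt_of_le_of_ne (hnn s u) fun h0 => ?_
        rw [← h0, zero_mul] at hu
        exact lt_irrefl _ hu
      exact ih u t (hstep s u hs hsu) (pos_of_mul_pos_right hu hsu.le)
  obtain ⟨n, t, ht, hnt⟩ := hreach s₀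
  exact absurd (hrow t (hpow n s₀ t rfl hnt)) (not_le.mpr ht)
end

section
/- If M is substochastic and every state can reach a defective state, then, with n = |S| the cardinality of S, every row sum of M^n is strictly less than 1: for all s ∈ S, Σ_t (M^n)_{s,t} < 1. -/
/-- If `M` is substochastic and every state can reach a defective state, then with
`n = |S|`, every row sum of `M ^ n` is strictly less than `1`. -/
theorem pow_card_row_sums_lt_one {S : Type*} [Fintype S] [DecidableEq S]
    (M : Matrix S S ℝ)
    (hnn : ∀ s t, 0 ≤ M s t)
    (hsub : ∀ s, ∑ t, M s t ≤ 1)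
    (hreach : ∀ s, ∃ (n : ℕ) (t : S), (∑ u, M t u < 1) ∧ 0 < (M ^ n) s t) :
    ∀ s, ∑ t, (M ^ Fintype.card S) s t < 1 := by
  classical
  have hpn : ∀ (k : ℕ) s t, 0 ≤ (M ^ k) s t := by
    intro k
    induction k with
    | zero => intro s t; simp only [pow_zero, Matrix.one_apply]; split_ifs <;> norm_num
    | succ k ih =>
      intro s t
      rw [pow_succ, Matrix.mul_apply]
      exact Finset.sum_nonneg fun u _ => mul_nonneg (ih s u) (hnn u t)
  obtain ⟨r, hr⟩ : ∃ r : ℕ → S → ℝ, ∀ k s, r k s = ∑ t, (M ^ k) s t := ⟨_, fun _ _ => rfl⟩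
  have r0 : ∀ s, r 0 s = 1 := by intro s; simp [hr, Matrix.one_apply]
  have rs : ∀ k s, r (k+1) s = ∑ u, M s u * r k u := by
    intro k s
    simp only [hr, pow_succ', Matrix.mul_apply, Finset.mul_sum]
    exact Finset.sum_comm
  have rs' : ∀ k s, r (k+1) s ≤ r k s := by
    intro k s
    have : r (k+1) s = ∑ u, (M ^ k) s u * ∑ t, M u t := by
      simp only [hr, pow_succ, Matrix.mul_apply, Finset.mul_sum]
      exact Finset.sum_comm
    rw [this, hr]
    exact Finset.sum_le_sum fun u _ => mul_le_of_le_one_right (hpn k s u) (hsub u)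
  have r1 : ∀ k s, r k s ≤ 1 := by
    intro k
    induction k with
    | zero => intro s; exact (r0 s).le
    | succ k ih => intro s; exact (rs' k s).trans (ih s)
  have key : ∀ k s, r (k+1) s = 1 → ∑ t, M s t = 1 ∧ ∀ u, 0 < M s u → r k u = 1 := by
    intro k s h
    rw [rs] at h
    have hle : ∀ u ∈ Finset.univ, M s u * r k u ≤ M s u :=
      fun u _ => mul_le_of_le_one_right (hnn s u) (r1 k u)
    have h2 := Finset.sum_le_sum hle
    have h3 := hsub s
    have h4 : ∑ t, M s t = 1 := le_antisymm h3 (h ▸ h2)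
    refine ⟨h4, fun u hu => ?_⟩
    have h5 := (Finset.sum_eq_sum_iff_of_le hle).1 (h.trans h4.symm) u (Finset.mem_univ u)
    exact (mul_eq_left₀ hu.ne').1 h5
  have stab : ∀ k, (∀ s, r k s = 1 → r (k+1) s = 1) → ∀ s, r k s ≠ 1 := by
    intro k hk s hs
    obtain ⟨m, t, ht, hm⟩ := hreach s
    have : ∀ m t, 0 < (M ^ m) s t → r k t = 1 := by
      intro m
      induction m with
      | zero =>
        intro t h
        by_cases hst : s = t
        · exact hst ▸ hs
        · simp [hst] at h
      | succ m ih =>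
        intro t h
        rw [pow_succ, Matrix.mul_apply] at h
        obtain ⟨u, hu⟩ : ∃ u, 0 < (M ^ m) s u * M u t := by
          by_contra hcon
          push Not at hcon
          exact absurd h (not_lt.2 (Finset.sum_nonpos fun u _ => hcon u))
        have hu1 : 0 < (M ^ m) s u := (hpn m s u).lt_of_ne' fun h0 => by simp [h0] at hu
        have hu2 : 0 < M u t := (hnn u t).lt_of_ne' fun h0 => by simp [h0] at hu
        exact (key k u (hk u (ih u hu1))).2 t hu2
    exact ht.ne (key k t (hk t (this m t hm))).1
  have card : ∀ k, (∀ s, r k s ≠ 1) ∨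
      (Finset.univ.filter fun s => r k s = 1).card + k ≤ Fintype.card S := by
    intro k
    induction k with
    | zero => right; simpa using Finset.card_le_univ _
    | succ k ih =>
      have mono : ∀ s, r (k+1) s = 1 → r k s = 1 :=
        fun s h => le_antisymm (r1 k s) (h ▸ rs' k s)
      rcases ih with ih | ih
      · exact Or.inl fun s h => ih s (mono s h)
      · by_cases hk : ∀ s, r k s = 1 → r (k+1) s = 1
        · exact Or.inl fun s h => stab k hk s (mono s h)
        · right
          push Not at hk
          obtain ⟨s, hs, hs'⟩ := hk
          have : (Finset.univ.filter fun s => r (k+1) s = 1).card <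
              (Finset.univ.filter fun s => r k s = 1).card := by
            apply Finset.card_lt_card
            rw [Finset.ssubset_iff_of_subset]
            · exact ⟨s, by simp [hs], by simp [hs']⟩
            · intro x; simpa using mono x
          omega
  intro s
  rw [← hr]
  refine lt_of_le_of_ne (r1 _ s) ?_
  rcases card (Fintype.card S) with h | h
  · exact h s
  · intro hs
    have : 0 < (Finset.univ.filter fun s => r (Fintype.card S) s = 1).card :=
      Finset.card_pos.2 ⟨s, by simp [hs]⟩
    omega
end

section
/- If M is substochastic and every state can reach a defective state, then, with n = |S| the cardinality of S, the matrix M^n is contractive in the L1 norm: there exists a constant c with 0 ≤ c < 1 such that for every vector y : S → ℝ, Σ_t |Σ_s y_s · (M^n)_{s,t}| ≤ c · Σ_s |y_s|. -/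
theorem pcc_pow_nonneg {S : Type*} [Fintype S] [DecidableEq S]
    (M : Matrix S S ℝ) (hnn : ∀ s t, 0 ≤ M s t) (k : ℕ) : ∀ s t, 0 ≤ (M ^ k) s t := by
  induction k with
  | zero =>
    intro s t
    rw [pow_zero, Matrix.one_apply]
    split_ifs <;> norm_num
  | succ k ih =>
    intro s t
    rw [pow_succ', Matrix.mul_apply]
    exact Finset.sum_nonneg fun u _ => mul_nonneg (hnn s u) (ih u t)

theorem pcc_row_succ {S : Type*} [Fintype S] [DecidableEq S]
    (M : Matrix S S ℝ) (k : ℕ) (s : S) :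
    ∑ t, (M ^ (k + 1)) s t = ∑ u, M s u * ∑ t, (M ^ k) u t := by
  simp only [pow_succ', Matrix.mul_apply]
  rw [Finset.sum_comm]
  simp only [Finset.mul_sum]

theorem pcc_row_le {S : Type*} [Fintype S] [DecidableEq S]
    (M : Matrix S S ℝ) (hnn : ∀ s t, 0 ≤ M s t) (hsub : ∀ s, ∑ t, M s t ≤ 1) (k : ℕ) :
    ∀ s, ∑ t, (M ^ k) s t ≤ 1 := by
  induction k with
  | zero => intro s; simp [Matrix.one_apply]
  | succ k ih =>
    intro s
    rw [pcc_row_succ]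
    refine le_trans (Finset.sum_le_sum fun u _ => ?_) (hsub s)
    exact mul_le_of_le_one_right (hnn s u) (ih u)

theorem pcc_row_anti {S : Type*} [Fintype S] [DecidableEq S]
    (M : Matrix S S ℝ) (hnn : ∀ s t, 0 ≤ M s t) (hsub : ∀ s, ∑ t, M s t ≤ 1) (k : ℕ) (s : S) :
    ∑ t, (M ^ (k + 1)) s t ≤ ∑ t, (M ^ k) s t := by
  have h : ∑ t, (M ^ (k + 1)) s t = ∑ u, (M ^ k) s u * ∑ t, M u t := by
    simp only [pow_succ, Matrix.mul_apply]
    rw [Finset.sum_comm]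
    simp only [Finset.mul_sum]
  rw [h]
  exact Finset.sum_le_sum fun u _ =>
    mul_le_of_le_one_right (pcc_pow_nonneg M hnn k s u) (hsub u)

theorem pcc_step {S : Type*} [Fintype S] [DecidableEq S]
    (M : Matrix S S ℝ) (hnn : ∀ s t, 0 ≤ M s t) (hsub : ∀ s, ∑ t, M s t ≤ 1) (k : ℕ) (s : S)
    (h : 1 ≤ ∑ t, (M ^ (k + 1)) s t) :
    1 ≤ ∑ t, M s t ∧ ∀ u, 0 < M s u → 1 ≤ ∑ t, (M ^ k) u t := by
  rw [pcc_row_succ] at h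
  have hr := pcc_row_le M hnn hsub k
  refine ⟨le_trans h (Finset.sum_le_sum fun u _ => mul_le_of_le_one_right (hnn s u) (hr u)), ?_⟩
  intro u hu
  by_contra hlt
  push Not at hlt
  have : ∑ u, M s u * ∑ t, (M ^ k) u t < ∑ u, M s u := by
    refine Finset.sum_lt_sum (fun v _ => mul_le_of_le_one_right (hnn s v) (hr v))
      ⟨u, Finset.mem_univ u, ?_⟩
    exact mul_lt_of_lt_one_right hu hlt
  linarith [hsub s]

theorem pcc_closed {S : Type*} [Fintype S] [DecidableEq S]
    (M : Matrix S S ℝ) (hnn : ∀ s t, 0 ≤ M s t) (P : S → Prop)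
    (hP : ∀ s, P s → ∀ u, 0 < M s u → P u) (n : ℕ) :
    ∀ s t, P s → 0 < (M ^ n) s t → P t := by
  induction n with
  | zero =>
    intro s t hs h
    rw [pow_zero, Matrix.one_apply] at h
    split_ifs at h with e
    · exact e ▸ hs
    · exact absurd h (lt_irrefl _)
  | succ n ih =>
    intro s t hs h
    rw [pow_succ', Matrix.mul_apply] at h
    obtain ⟨u, _, hu⟩ := Finset.exists_lt_of_sum_lt (s := Finset.univ)
      (f := fun _ : S => (0 : ℝ)) (by simpa using h)
    have h1 : 0 < M s u := pos_of_mul_pos_left hu (pcc_pow_nonneg M hnn n u t)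
    have h2 : 0 < (M ^ n) u t := pos_of_mul_pos_right hu (hnn s u)
    exact ih u t (hP s hs u h1) h2

/-- If `M` is substochastic and every state can reach a defective state, then with
`n = |S|`, the matrix `M ^ n` is contractive in the `L1` norm. -/
theorem pow_card_contractive {S : Type*} [Fintype S] [DecidableEq S]
    (M : Matrix S S ℝ)
    (hnn : ∀ s t, 0 ≤ M s t)
    (hsub : ∀ s, ∑ t, M s t ≤ 1)
    (hreach : ∀ s, ∃ (n : ℕ) (t : S), (∑ u, M t u < 1) ∧ 0 < (M ^ n) s t) :
    ∃ c : ℝ, 0 ≤ c ∧ c < 1 ∧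
      ∀ y : S → ℝ,
        ∑ t, |∑ s, y s * (M ^ Fintype.card S) s t| ≤ c * ∑ s, |y s| := by
  classical
  let A : ℕ → Finset S := fun k => Finset.univ.filter fun s => 1 ≤ ∑ t, (M ^ k) s t
  have memA : ∀ k s, s ∈ A k ↔ 1 ≤ ∑ t, (M ^ k) s t := fun k s => by simp [A]
  have hanti : ∀ k, A (k + 1) ⊆ A k := fun k s hs => by
    rw [memA] at *
    exact hs.trans (pcc_row_anti M hnn hsub k s)
  have hstrict : ∀ k, A k = ∅ ∨ (A k).card + k ≤ Fintype.card S := by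
    intro k
    induction k with
    | zero => right; simpa using Finset.card_le_univ (A 0)
    | succ k ih =>
      by_cases he : A (k + 1) = ∅
      · exact Or.inl he
      right
      obtain ⟨s, hs⟩ := Finset.nonempty_iff_ne_empty.mpr he
      have hne : A k ≠ ∅ := Finset.nonempty_iff_ne_empty.mp ⟨s, hanti k hs⟩
      have hc := ih.resolve_left hne
      have hss : A (k + 1) ≠ A k := by
        intro heq
        obtain ⟨n, t, ht, hp⟩ := hreach s
        have htA := pcc_closed M hnn (fun v => v ∈ A (k + 1)) (fun v hv u hu => by
          have := (pcc_step M hnn hsub k v ((memA _ _).1 hv)).2 u hu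
          show u ∈ A (k + 1)
          rw [heq, memA]
          exact this) n s t hs hp
        have := (pcc_step M hnn hsub k t ((memA _ _).1 htA)).1
        linarith
      have := Finset.card_lt_card ((hanti k).ssubset_of_ne hss)
      omega
  have hlt : ∀ s, ∑ t, (M ^ Fintype.card S) s t < 1 := by
    intro s
    by_contra h
    push Not at h
    have hs := (memA _ _).2 h
    have hpos := Finset.card_pos.mpr ⟨s, hs⟩
    rcases hstrict (Fintype.card S) with h0 | h0
    · rw [h0] at hs; simp at hs
    · omega
  have hN := pcc_pow_nonneg M hnn (Fintype.card S)
  generalize M ^ Fintype.card S = N at hlt hN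
  obtain ⟨c, hc0, hc1, hc⟩ : ∃ c : ℝ, 0 ≤ c ∧ c < 1 ∧ ∀ s, ∑ t, N s t ≤ c := by
    rcases isEmpty_or_nonempty S with hS | hS
    · exact ⟨0, le_rfl, one_pos, fun s => (hS.false s).elim⟩
    · obtain ⟨m, hm⟩ := Finite.exists_max fun s => ∑ t, N s t
      exact ⟨_, Finset.sum_nonneg fun t _ => hN m t, hlt m, hm⟩
  refine ⟨c, hc0, hc1, fun y => ?_⟩
  calc ∑ t, |∑ s, y s * N s t| ≤ ∑ t, ∑ s, |y s| * N s t := by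
        refine Finset.sum_le_sum fun t _ => (Finset.abs_sum_le_sum_abs _ _).trans (le_of_eq ?_)
        exact Finset.sum_congr rfl fun s _ => by rw [abs_mul, abs_of_nonneg (hN s t)]
    _ = ∑ s, |y s| * ∑ t, N s t := by
        rw [Finset.sum_comm]
        simp only [Finset.mul_sum]
    _ ≤ ∑ s, |y s| * c :=
        Finset.sum_le_sum fun s _ => mul_le_mul_of_nonneg_left (hc s) (abs_nonneg _)
    _ = c * ∑ s, |y s| := by rw [← Finset.sum_mul, mul_comm]
end

section
/- If M is substochastic and every state can reach a defective state, then the series of matrix powers Σ_{n=0}^∞ M^n converges (entrywise) and its sum equals (I − M)⁻¹; that is, the family (M^n)_{n∈ℕ} has sum (I − M)⁻¹ in the space of S × S real matrices. -/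
/-- If `M` is substochastic and every state can reach a defective state, then the series
`∑ n, M ^ n` converges entrywise with sum `(I - M)⁻¹`. -/
theorem geometric_series_sum {S : Type*} [Fintype S] [DecidableEq S]
    (M : Matrix S S ℝ)
    (hnn : ∀ s t, 0 ≤ M s t)
    (hsub : ∀ s, ∑ t, M s t ≤ 1)
    (hreach : ∀ s, ∃ (n : ℕ) (t : S), (∑ u, M t u < 1) ∧ 0 < (M ^ n) s t) :
    HasSum (fun n : ℕ => M ^ n) (1 - M)⁻¹ := by
  have hpow : ∀ (n : ℕ) (s t : S), 0 ≤ (M ^ n) s t := by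
    intro n
    induction n with
    | zero =>
      intro s t
      rw [pow_zero, Matrix.one_apply]
      split_ifs <;> norm_num
    | succ k ih =>
      intro s t
      rw [pow_succ, Matrix.mul_apply]
      exact Finset.sum_nonneg fun u _ => mul_nonneg (ih s u) (hnn u t)
  -- telescoping of the row sums
  have hstep : ∀ (n : ℕ) (s : S), ∑ t, (M ^ n) s t * (1 - ∑ u, M t u)
      = ∑ t, (M ^ n) s t - ∑ t, (M ^ (n + 1)) s t := by
    intro n s
    have h : ∑ t, (M ^ (n + 1)) s t = ∑ t, (M ^ n) s t * ∑ u, M t u := by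
      simp_rw [pow_succ, Matrix.mul_apply, Finset.mul_sum]
      exact Finset.sum_comm
    rw [h, ← Finset.sum_sub_distrib]
    exact Finset.sum_congr rfl fun t _ => by ring
  have hdef : ∀ s t : S, ∑ u, M t u < 1 → Summable fun n : ℕ => (M ^ n) s t := by
    intro s t ht
    have hd : 0 < 1 - ∑ u, M t u := sub_pos.mpr ht
    have hs : Summable fun n : ℕ => (M ^ n) s t * (1 - ∑ u, M t u) := by
      refine summable_of_sum_range_le (c := 1)
        (fun n => mul_nonneg (hpow n s t) hd.le) fun N => ?_
      calc ∑ n ∈ Finset.range N, (M ^ n) s t * (1 - ∑ u, M t u)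
          ≤ ∑ n ∈ Finset.range N, (∑ t, (M ^ n) s t - ∑ t, (M ^ (n + 1)) s t) := by
            refine Finset.sum_le_sum fun n _ => ?_
            rw [← hstep]
            exact Finset.single_le_sum
              (f := fun t => (M ^ n) s t * (1 - ∑ u, M t u))
              (fun v _ => mul_nonneg (hpow n s v) (sub_nonneg.mpr (hsub v)))
              (Finset.mem_univ t)
        _ = ∑ t, (M ^ 0) s t - ∑ t, (M ^ N) s t :=
            Finset.sum_range_sub' (fun n => ∑ t, (M ^ n) s t) N
        _ ≤ 1 := by
            have h0 : ∑ t, (M ^ 0) s t = 1 := by simp [Matrix.one_apply]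
            have h1 : 0 ≤ ∑ t, (M ^ N) s t := Finset.sum_nonneg fun v _ => hpow N s v
            linarith
    exact (summable_mul_right_iff hd.ne').mp hs
  have hall : ∀ s u : S, Summable fun n : ℕ => (M ^ n) s u := by
    intro s u
    obtain ⟨k, t, ht, hk⟩ := hreach u
    have hs : Summable fun n : ℕ => (M ^ n) s u * (M ^ k) u t := by
      refine Summable.of_nonneg_of_le (fun n => mul_nonneg (hpow n s u) hk.le) (fun n => ?_)
        ((summable_nat_add_iff k).mpr (hdef s t ht))
      rw [pow_add, Matrix.mul_apply]
      exact Finset.single_le_sum (f := fun v => (M ^ n) s v * (M ^ k) v t)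
        (fun v _ => mul_nonneg (hpow n s v) (hpow k v t)) (Finset.mem_univ u)
    exact (summable_mul_right_iff hk.ne').mp hs
  have hM : Summable fun n : ℕ => M ^ n :=
    Pi.summable.mpr fun s => Pi.summable.mpr fun u => hall s u
  rw [Matrix.inv_eq_right_inv hM.one_sub_mul_tsum_pow]
  exact hM.hasSum
end

section
/- Under these assumptions, the matrix I − Q is invertible and the powers of T converge entrywise to the block matrix with blocks I, 0, (I − Q)⁻¹·R, 0; that is, lim_{n→∞} T^n = fromBlocks I 0 ((I − Q)⁻¹ · R) 0, where I is the A × A identity matrix. -/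
section helper
attribute [local instance] Matrix.linftyOpNormedRing Matrix.linftyOpNormedAddCommGroup

theorem linf_lt {n : Type*} [Fintype n] [DecidableEq n] (M : Matrix n n ℝ)
    (h0 : ∀ i j, 0 ≤ M i j) (c : ℝ) (hc : 0 < c) (h : ∀ i, ∑ j, M i j < c) : ‖M‖ < c := by
  lift c to NNReal using hc.le
  rw [Matrix.linfty_opNorm_def, NNReal.coe_lt_coe, Finset.sup_lt_iff (by exact_mod_cast hc)]
  intro i _
  rw [← NNReal.coe_lt_coe]
  push_cast
  refine lt_of_eq_of_lt (Finset.sum_congr rfl fun j _ => ?_) (h i)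
  simp [abs_of_nonneg (h0 i j)]

theorem linf_le {n : Type*} [Fintype n] [DecidableEq n] (M : Matrix n n ℝ)
    (h0 : ∀ i j, 0 ≤ M i j) (h : ∀ i, ∑ j, M i j ≤ 1) : ‖M‖ ≤ 1 :=
  le_of_forall_gt fun c hc =>
    linf_lt M h0 c (by linarith) fun i => (h i).trans_lt hc

theorem pow_lim {n : Type*} [Fintype n] [DecidableEq n] (Q : Matrix n n ℝ)
    (h1 : ‖Q‖ ≤ 1) (N : ℕ) (hN : 0 < N) (h : ‖Q ^ N‖ < 1) :
    IsUnit (1 - Q) ∧ Filter.Tendsto (fun k => Q ^ k) Filter.atTop (nhds 0) := by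
  constructor
  · have : @CompleteSpace (Matrix n n ℝ)
        (Matrix.linftyOpNormedRing (n := n) (α := ℝ)).toMetricSpace.toPseudoMetricSpace.toUniformSpace :=
      inferInstanceAs (CompleteSpace (n → n → ℝ))
    have hu : IsUnit (1 - Q ^ N) := isUnit_one_sub_of_norm_lt_one h
    rw [← mul_neg_geom_sum] at hu
    rw [Matrix.isUnit_iff_isUnit_det, Matrix.det_mul] at hu
    rw [Matrix.isUnit_iff_isUnit_det]
    exact isUnit_of_mul_isUnit_left hu
  · have hanti : Antitone fun k => ‖Q ^ k‖ := by
      refine antitone_nat_of_succ_le fun k => ?_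
      rw [pow_succ]
      exact (norm_mul_le _ _).trans (mul_le_of_le_one_right (norm_nonneg _) h1)
    have hsub : Filter.Tendsto (fun k : ℕ => N * k) Filter.atTop Filter.atTop :=
      Filter.tendsto_id.const_mul_atTop' hN
    have := (tendsto_iff_tendsto_subseq_of_antitone hanti hsub (l := 0)).2 (by
      have := (tendsto_pow_atTop_nhds_zero_of_norm_lt_one h).norm
      simpa [Function.comp_def, pow_mul] using this)
    exact tendsto_zero_iff_norm_tendsto_zero.2 this

theorem pow_lim' {n : Type*} [Fintype n] [DecidableEq n] (Q : Matrix n n ℝ)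
    (h0 : ∀ k i j, 0 ≤ (Q ^ k) i j)
    (h1 : ∀ i, ∑ j, Q i j ≤ 1) (N : ℕ) (hN : 0 < N) (h : ∀ i, ∑ j, (Q ^ N) i j < 1) :
    IsUnit (1 - Q) ∧ Filter.Tendsto (fun k => Q ^ k) Filter.atTop (nhds 0) :=
  pow_lim Q (linf_le Q (by simpa using h0 1) h1) N hN (linf_lt _ (h0 N) 1 one_pos h)

end helper

/-- For an absorbing Markov chain in block form `T = fromBlocks I 0 R Q`, the matrix
`I - Q` is invertible and `T ^ n` converges entrywise to `fromBlocks I 0 ((I - Q)⁻¹ * R) 0`. -/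
theorem absorbing_chain_limit {A Tr : Type*} [Fintype A] [Fintype Tr]
    [DecidableEq A] [DecidableEq Tr]
    (R : Matrix Tr A ℝ) (Q : Matrix Tr Tr ℝ)
    (T : Matrix (A ⊕ Tr) (A ⊕ Tr) ℝ)
    (hT : T = Matrix.fromBlocks 1 0 R Q)
    (hnn : ∀ p q, 0 ≤ T p q)
    (hrow : ∀ p, ∑ q, T p q = 1)
    (hreach : ∀ i : Tr, ∃ (n : ℕ) (j : A), 0 < (T ^ n) (Sum.inr i) (Sum.inl j)) :
    IsUnit (1 - Q) ∧
      Filter.Tendsto (fun n : ℕ => T ^ n) Filter.atTop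
        (nhds (Matrix.fromBlocks 1 0 ((1 - Q)⁻¹ * R) 0)) := by
  have hpow : ∀ n : ℕ, T ^ n =
      Matrix.fromBlocks 1 0 ((∑ i ∈ Finset.range n, Q ^ i) * R) (Q ^ n) := by
    intro n
    induction n with
    | zero => simp
    | succ n ih =>
      rw [pow_succ, ih, hT, Matrix.fromBlocks_multiply, Finset.sum_range_succ]
      simp [Matrix.add_mul, pow_succ]
  have hst : T ∈ Matrix.rowStochastic ℝ (A ⊕ Tr) :=
    Matrix.mem_rowStochastic_iff_sum.2 ⟨hnn, hrow⟩
  have hstn : ∀ n, T ^ n ∈ Matrix.rowStochastic ℝ (A ⊕ Tr) := fun n => pow_mem hst n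
  have hTn0 : ∀ n p q, 0 ≤ (T ^ n) p q := fun n =>
    (Matrix.mem_rowStochastic_iff_sum.1 (hstn n)).1
  have hsum : ∀ n i, ∑ j, (T ^ n) (Sum.inr i) (Sum.inl j) + ∑ j, (Q ^ n) i j = 1 := by
    intro n i
    have := (Matrix.mem_rowStochastic_iff_sum.1 (hstn n)).2 (Sum.inr i)
    rw [Fintype.sum_sum_type] at this
    simpa [hpow n] using this
  have hQ0 : ∀ n i j, 0 ≤ (Q ^ n) i j := by
    intro n i j
    simpa [hpow n] using hTn0 n (Sum.inr i) (Sum.inr j)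
  have hle : ∀ n i, ∑ j, (Q ^ n) i j ≤ 1 := by
    intro n i
    have : 0 ≤ ∑ j, (T ^ n) (Sum.inr i) (Sum.inl j) := Finset.sum_nonneg fun j _ => hTn0 n _ _
    linarith [hsum n i]
  have hanti : ∀ i, Antitone fun n => ∑ j, (Q ^ n) i j := by
    intro i
    refine antitone_nat_of_succ_le fun n => ?_
    simp only [pow_succ, Matrix.mul_apply]
    rw [Finset.sum_comm]
    refine Finset.sum_le_sum fun k _ => ?_
    rw [← Finset.mul_sum]
    exact mul_le_of_le_one_right (hQ0 n i k) (by simpa using hle 1 k)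
  choose m a hm using hreach
  have hlt : ∀ i, ∑ j, (Q ^ (1 + ∑ i, m i)) i j < 1 := by
    intro i
    have h1 : m i ≤ 1 + ∑ i, m i :=
      (Finset.single_le_sum (fun _ _ => Nat.zero_le _) (Finset.mem_univ i)).trans
        (Nat.le_add_left _ _)
    have h2 : 0 < ∑ j, (T ^ m i) (Sum.inr i) (Sum.inl j) :=
      Finset.sum_pos' (fun j _ => hTn0 _ _ _) ⟨a i, Finset.mem_univ _, hm i⟩
    have h3 := hanti i h1
    simp only at h3
    linarith [hsum (m i) i]
  obtain ⟨hu, hlim⟩ := pow_lim' Q hQ0 (by simpa using hle 1) _ (by omega) hlt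
  refine ⟨hu, ?_⟩
  have hdet := (Matrix.isUnit_iff_isUnit_det _).1 hu
  have hgeom : ∀ n : ℕ, ∑ i ∈ Finset.range n, Q ^ i = (1 - Q)⁻¹ * (1 - Q ^ n) := by
    intro n
    rw [← mul_neg_geom_sum, Matrix.nonsing_inv_mul_cancel_left _ _ hdet]
  simp only [hpow, hgeom]
  have hc : Continuous fun M : Matrix Tr Tr ℝ =>
      (Matrix.fromBlocks 1 0 ((1 - Q)⁻¹ * (1 - M) * R) M : Matrix (A ⊕ Tr) (A ⊕ Tr) ℝ) := by
    refine Continuous.matrix_fromBlocks continuous_const continuous_const ?_ continuous_id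
    fun_prop
  have := (hc.tendsto 0).comp hlim
  simpa [Function.comp_def] using this
end

section
/- For every predicate t there exists a finite set of packets b_t ∈ Finset Pk such that for all a, c ∈ Finset Pk, ⟦t⟧_{a,c} = [c = a ∩ b_t]. Moreover b_t can be chosen compositionally: b_drop = ∅, b_skip = the set of all packets, b_{(f=v)} = {π ∈ Pk | π f = v}, b_{¬t} = (set of all packets) ∖ b_t, b_{t₁∨t₂} = b_{t₁} ∪ b_{t₂}, and b_{t₁;t₂} = b_{t₁} ∩ b_{t₂}. -/
/-- NetKAT-style predicates over fields `F` and values `V`: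
`drop`, `skip`, tests `f = v`, disjunction, conjunction (sequencing), and negation. -/
inductive NKPred (F V : Type*) where
  | drop : NKPred F V
  | skip : NKPred F V
  | test : F → V → NKPred F V
  | or : NKPred F V → NKPred F V → NKPred F V
  | seq : NKPred F V → NKPred F V → NKPred F V
  | not : NKPred F V → NKPred F V

variable {F V : Type*} [Fintype F] [Fintype V] [DecidableEq F] [DecidableEq V]

/-- The matrix semantics of a predicate, indexed by sets of packets `Finset (F → V)`. -/
noncomputable def NKPred.sem : NKPred F V → Matrix (Finset (F → V)) (Finset (F → V)) ℝ
  | .drop => fun _ b => if b = ∅ then 1 else 0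
  | .skip => fun a b => if b = a then 1 else 0
  | .test f v => fun a b => if b = a.filter (fun π => π f = v) then 1 else 0
  | .not t => fun a b => (if b ⊆ a then (1 : ℝ) else 0) * t.sem a (a \ b)
  | .or t₁ t₂ => fun a b =>
      ∑ c, ∑ d, (if c ∪ d = b then (1 : ℝ) else 0) * t₁.sem a c * t₂.sem a d
  | .seq t₁ t₂ => t₁.sem * t₂.sem

/-- The compositionally chosen packet set `b_t` associated with a predicate `t`. -/
def NKPred.bset : NKPred F V → Finset (F → V)
  | .drop => ∅
  | .skip => Finset.univ
  | .test f v => Finset.univ.filter (fun π => π f = v)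
  | .not t => Finset.univ \ t.bset
  | .or t₁ t₂ => t₁.bset ∪ t₂.bset
  | .seq t₁ t₂ => t₁.bset ∩ t₂.bset

/-- Every predicate `t` acts as intersection with the packet set `b_t`:
`⟦t⟧_{a,c} = [c = a ∩ b_t]`, with `b_t` chosen compositionally as in `NKPred.bset`. -/
theorem NKPred.sem_eq_inter_bset (t : NKPred F V) (a c : Finset (F → V)) :
    t.sem a c = if c = a ∩ t.bset then 1 else 0 := by
  induction t generalizing a c with
  | drop => simp [NKPred.sem, NKPred.bset]
  | skip => simp [NKPred.sem, NKPred.bset]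
  | test f v =>
    have h : a ∩ Finset.univ.filter (fun π : F → V => π f = v) =
        a.filter (fun π => π f = v) := by
      ext π; simp
    simp only [NKPred.sem, NKPred.bset, h]
  | not t ih =>
    simp only [NKPred.sem, NKPred.bset, ih, ← ite_and, ite_mul, one_mul, zero_mul]
    refine if_congr ?_ rfl rfl
    constructor
    · rintro ⟨h1, h2⟩
      ext π
      have h3 := Finset.ext_iff.mp h2 π
      have h4 := @h1 π
      simp only [Finset.mem_sdiff, Finset.mem_inter, Finset.mem_univ, true_and] at *
      tauto
    · rintro rfl
      refine ⟨Finset.inter_subset_left, ?_⟩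
      ext π
      simp only [Finset.mem_sdiff, Finset.mem_inter, Finset.mem_univ, true_and]
      tauto
  | or t₁ t₂ ih₁ ih₂ =>
    simp only [NKPred.sem, NKPred.bset, ih₁, ih₂, mul_ite, mul_one, mul_zero,
      Finset.sum_ite_eq', Finset.mem_univ, if_true]
    refine if_congr ?_ rfl rfl
    rw [Finset.inter_union_distrib_left]
    exact eq_comm
  | seq t₁ t₂ ih₁ ih₂ =>
    simp only [NKPred.sem, NKPred.bset, Matrix.mul_apply, ih₁, ih₂, ite_mul, one_mul, zero_mul,
      Finset.sum_ite_eq', Finset.mem_univ, if_true]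
    refine if_congr ?_ rfl rfl
    rw [Finset.inter_assoc]
end
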